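/- arXiv:1706.01579 — 2 statements merged into one kernel-verified Lean document; each statement's English description precedes it below -/
import Mathlib

section
/- Let k ≥ 1 and let S ⊆ ℤ⁺ be enumerated in increasing order as s₁ < s₂ < s₃ < ⋯, and suppose that s_{i+k} − s_i → ∞ as i → ∞ (i.e., for every M there is an N such that s_{i+k} − s_i > M for all i ≥ N). Then S is not (k+2)-walkable: there exists a coloring χ : ℤ → Fin (k+2) admitting no infinite monochromatic walk over S. In particular the walkability order of S is at most k+1. -/
/-- `S` is `m`-walkable: every coloring `χ : ℤ → Fin m` admits an infinite increasing
monochromatic sequence whose consecutive differences lie in `S`. -/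
def IsKWalkable (S : Set ℤ) (m : ℕ) : Prop :=
  ∀ χ : ℤ → Fin m, ∃ a : ℕ → ℤ, StrictMono a ∧
    (∀ i : ℕ, a (i + 1) - a i ∈ S) ∧ ∀ i : ℕ, χ (a i) = χ (a 0)

theorem exists_avoid_color (k : ℕ) (c : Fin (k + 2)) (g : Fin k → Fin (k + 2)) :
    ∃ z, z ≠ c ∧ ∀ t, z ≠ g t := by
  classical
  have hcard : (insert c (Finset.univ.image g)).card < (Finset.univ : Finset (Fin (k + 2))).card := by
    have h1 := Finset.card_insert_le c (Finset.univ.image g)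
    have h2 : (Finset.univ.image g).card ≤ (Finset.univ : Finset (Fin k)).card :=
      Finset.card_image_le
    simp only [Finset.card_univ, Fintype.card_fin] at h2 ⊢
    omega
  obtain ⟨z, -, hz⟩ := Finset.exists_mem_notMem_of_card_lt_card hcard
  refine ⟨z, fun h => hz (by simp [h]), fun t h => hz (by simp [h])⟩

noncomputable def greedyColor (k : ℕ) (c : ℕ → Fin (k + 2)) (P : ℕ → Fin k → ℕ) (y : ℕ) :
    Fin (k + 2) :=
  Classical.choose (exists_avoid_color k (c y)
    (fun t => if _h : P y t < y then greedyColor k c P (P y t) else 0))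
termination_by y

theorem greedyColor_spec (k : ℕ) (c : ℕ → Fin (k + 2)) (P : ℕ → Fin k → ℕ) (y : ℕ) :
    greedyColor k c P y ≠ c y ∧
      ∀ t, P y t < y → greedyColor k c P y ≠ greedyColor k c P (P y t) := by
  have h := Classical.choose_spec (exists_avoid_color k (c y)
    (fun t => if _h : P y t < y then greedyColor k c P (P y t) else 0))
  rw [← greedyColor] at h
  refine ⟨h.1, fun t ht => ?_⟩
  have := h.2 t
  rwa [dif_pos ht] at this

theorem sparse_step (k : ℕ) (s : ℕ → ℤ) (hmono : StrictMono s)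
    (hgap : ∀ M : ℤ, ∃ N : ℕ, ∀ i ≥ N, M < s (i + k) - s i) (m : ℕ) :
    ∃ m' : ℕ, m < m' ∧ ∀ y : ℕ, m' ≤ y → ∃ i0 : ℕ, ∀ i, (y : ℤ) - m < s i → s i ≤ y →
      ∃ t : Fin k, i = i0 + t := by
  classical
  obtain ⟨N, hN⟩ := hgap m
  refine ⟨(s N).toNat + m + 1, by omega, fun y hy => ?_⟩
  by_cases hex : ∃ i, (y : ℤ) - m < s i
  · refine ⟨Nat.find hex, fun i h1 h2 => ?_⟩
    have h3 := Nat.find_spec hex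
    have h4 : Nat.find hex ≤ i := Nat.find_min' hex h1
    have h5 : N < Nat.find hex := hmono.lt_iff_lt.1 (by omega)
    have h6 := hN _ h5.le
    have h7 : i < Nat.find hex + k := hmono.lt_iff_lt.1 (by omega)
    exact ⟨⟨i - Nat.find hex, by omega⟩, by simp; omega⟩
  · exact ⟨0, fun i h1 => (hex ⟨i, h1⟩).elim⟩

/-- If `S = {s₁ < s₂ < ⋯} ⊆ ℤ⁺` satisfies `s_{i+k} − s_i → ∞`, then `S` is not
`(k+2)`-walkable. -/
theorem not_walkable_of_sparse (k : ℕ) (hk : 1 ≤ k) (s : ℕ → ℤ) (hmono : StrictMono s)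
    (hpos : ∀ i, 0 < s i)
    (hgap : ∀ M : ℤ, ∃ N : ℕ, ∀ i ≥ N, M < s (i + k) - s i) :
    ¬ IsKWalkable (Set.range s) (k + 2) := by
  classical
  choose g hg1 hg2 using sparse_step k s hmono hgap
  obtain ⟨n, hn0, hnS⟩ : ∃ n : ℕ → ℕ, n 0 = 0 ∧ ∀ j, n (j + 1) = g (n j) :=
    ⟨fun j => g^[j] 0, rfl, fun j => Function.iterate_succ_apply' g j 0⟩
  have hnm : StrictMono n := strictMono_nat_of_lt_succ fun j => by rw [hnS]; exact hg1 _
  obtain ⟨b, hb1, hb2⟩ : ∃ b : ℕ → ℕ, (∀ y, n (b y) ≤ y) ∧ ∀ y j, n j ≤ y → j ≤ b y := by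
    refine ⟨fun y => Nat.findGreatest (fun j => n j ≤ y) y, fun y => ?_, fun y j h => ?_⟩
    · exact Nat.findGreatest_spec (P := fun j => n j ≤ y) (Nat.zero_le y) (by simp [hn0])
    · exact Nat.le_findGreatest ((hnm.id_le j).trans h) h
  have hi : ∀ y : ℕ, ∃ i0 : ℕ, 1 ≤ b y → ∀ i, (y : ℤ) - n (b y - 1) < s i → s i ≤ y →
      ∃ t : Fin k, i = i0 + t := by
    intro y
    by_cases h : 1 ≤ b y
    · obtain ⟨i0, h0⟩ := hg2 (n (b y - 1)) y (by
        rw [← hnS, Nat.sub_add_cancel h]; exact hb1 y)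
      exact ⟨i0, fun _ => h0⟩
    · exact ⟨0, fun h' => (h h').elim⟩
  choose i0 hi0 using hi
  let c : ℕ → Fin (k + 2) := fun y => Fin.ofNat (k + 2) (b y)
  let P : ℕ → Fin k → ℕ := fun y t => ((y : ℤ) - s (i0 y + t)).toNat
  have hf := greedyColor_spec k c P
  intro hw
  obtain ⟨a, ha, hstep, hcol⟩ := hw fun z => greedyColor k c P z.toNat
  have hgrow : ∀ i : ℕ, a 0 + i ≤ a i := by
    intro i
    induction i with
    | zero => simp
    | succ i ih => have := ha (Nat.lt_succ_self i); push_cast; simp only [Nat.succ_eq_add_one] at this; omega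
  obtain ⟨p, hp⟩ : ∃ p, 0 ≤ a p := ⟨(a 0).natAbs, by have := hgrow (a 0).natAbs; omega⟩
  set C := greedyColor k c P (a 0).toNat with hC
  obtain ⟨J, hJC, hJ⟩ : ∃ J : ℕ, Fin.ofNat (k + 2) J = C ∧ a p < n J := by
    refine ⟨C.val + (k + 2) * ((a p).toNat + 1), ?_, ?_⟩
    · apply Fin.ext
      simp [Fin.ofNat, Nat.mod_eq_of_lt C.isLt]
    · have h1 := hnm.id_le (C.val + (k + 2) * ((a p).toNat + 1))
      simp only [id] at h1
      have h2 : (a p).toNat + 1 ≤ (k + 2) * ((a p).toNat + 1) :=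
        Nat.le_mul_of_pos_left _ (by omega)
      omega
  have hex : ∃ m, (n J : ℤ) ≤ a m :=
    ⟨(a 0).natAbs + n J, by have := hgrow ((a 0).natAbs + n J); omega⟩
  have hm := Nat.find_spec hex
  have hmin := fun q => @Nat.find_min _ _ hex q
  generalize Nat.find hex = m at hm hmin
  have hpm : p < m := ha.lt_iff_lt.1 (by omega)
  obtain ⟨q, rfl⟩ : ∃ q, m = q + 1 := ⟨m - 1, by omega⟩
  have hq := hmin q (Nat.lt_succ_self q)
  have hq0 : 0 ≤ a q := hp.trans (ha.monotone (by omega))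
  obtain ⟨i, his⟩ := hstep q
  have c1 : greedyColor k c P (a (q + 1)).toNat = C := hcol (q + 1)
  have c2 : greedyColor k c P (a q).toNat = C := hcol q
  obtain ⟨x, hx⟩ := Int.eq_ofNat_of_zero_le hq0
  obtain ⟨y, hy⟩ : ∃ y : ℕ, a (q + 1) = y :=
    Int.eq_ofNat_of_zero_le (by have := hpos i; omega)
  rw [hx] at c2 his hq
  rw [hy] at c1 his hm
  simp only [Int.toNat_natCast] at c1 c2
  have hbJ : J ≤ b y := hb2 y J (by omega)
  rcases hbJ.eq_or_lt with h | h
  · apply (hf y).1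
    rw [c1, ← hJC, h]
  · have hle : n J ≤ n (b y - 1) := hnm.monotone (by omega)
    have hpi := hpos i
    obtain ⟨t, ht⟩ := hi0 y (by omega) i (by omega) (by omega)
    have hP : P y t = x := by
      simp only [P]
      rw [← ht]
      omega
    apply (hf y).2 t (by rw [hP]; omega)
    rw [hP, c1, c2]
end

section
/- Let S ⊆ ℤ⁺ be enumerated in increasing order as s₁ < s₂ < s₃ < ⋯, and suppose that the gaps s_{i+1} − s_i tend to infinity as i → ∞. Then S is not 3-walkable, so ord(S) ≤ 2. -/
/-- Avoiding one forbidden residue and one forbidden color. -/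
theorem exists_color (n : ℕ) (d : Fin 3) : ∃ c : Fin 3, c.val ≠ n % 3 ∧ d ≠ c := by
  have h : ∀ (m d : Fin 3), ∃ c : Fin 3, c.val ≠ m.val ∧ d ≠ c := by decide
  exact h ⟨n % 3, Nat.mod_lt _ (by norm_num)⟩ d

/-- Greedy coloring when every vertex has at most one `far` predecessor. -/
theorem exists_coloring (lvl : ℕ → ℕ) (far : ℕ → ℕ → Prop)
    (hfar : ∀ p q x, far p x → far q x → p = q) :
    ∃ f : ℕ → Fin 3, ∀ x, (f x).val ≠ lvl x % 3 ∧ ∀ p < x, far p x → f p ≠ f x := by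
  have H : ∀ (x : ℕ) (f : ∀ y, y < x → Fin 3), ∃ c : Fin 3, c.val ≠ lvl x % 3 ∧
      ∀ p (h : p < x), far p x → f p h ≠ c := by
    intro x f
    by_cases hp : ∃ p, p < x ∧ far p x
    · obtain ⟨p, hpx, hpf⟩ := hp
      obtain ⟨c, hc, hd⟩ := exists_color (lvl x) (f p hpx)
      refine ⟨c, hc, fun q hq hqf => ?_⟩
      obtain rfl := hfar p q x hpf hqf
      exact hd
    · obtain ⟨c, hc, -⟩ := exists_color (lvl x) 0
      exact ⟨c, hc, fun q hq hqf => absurd ⟨q, hq, hqf⟩ hp⟩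
  choose G hG using H
  have wf : WellFounded (fun a b : ℕ => a < b) := wellFounded_lt
  refine ⟨wf.fix G, fun x => ?_⟩
  rw [wf.fix_eq G x]
  exact hG x (fun y _ => wf.fix G y)

theorem exists_level (g : ℕ → ℕ) : ∃ lvl : ℕ → ℕ, (∀ n, ∃ X, ∀ x ≥ X, n ≤ lvl x) ∧
    ∀ x, 2 ≤ lvl x → ∃ M, g M ≤ x ∧ ∀ p, lvl p + 2 ≤ lvl x → p < M := by
  classical
  obtain ⟨L, hL0, hL⟩ : ∃ L : ℕ → ℕ, L 0 = 0 ∧ ∀ n, L (n + 1) = L n + g (L n) + 1 :=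
    ⟨fun n => Nat.rec (motive := fun _ => ℕ) 0 (fun _ a => a + g a + 1) n, rfl, fun _ => rfl⟩
  have hmono : StrictMono L := strictMono_nat_of_lt_succ (fun n => by rw [hL]; omega)
  have hid : ∀ n, n ≤ L n := fun n => hmono.le_apply
  let lvl : ℕ → ℕ := fun x => Nat.findGreatest (fun k => L k ≤ x) x
  have h1 : ∀ x, L (lvl x) ≤ x := fun x =>
    Nat.findGreatest_spec (P := fun k => L k ≤ x) (m := 0) (Nat.zero_le _)
      (by simp [hL0])
  have h2 : ∀ x k, L k ≤ x → k ≤ lvl x := fun x k hk =>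
    Nat.le_findGreatest (P := fun k => L k ≤ x) ((hid k).trans hk) hk
  refine ⟨lvl, fun n => ⟨L n, fun x hx => h2 x n hx⟩, fun x hx => ?_⟩
  obtain ⟨m, hm⟩ : ∃ m, lvl x = m + 1 := ⟨lvl x - 1, by omega⟩
  refine ⟨L m, ?_, fun p hp => ?_⟩
  · have := h1 x
    rw [hm, hL] at this
    omega
  · by_contra hcon
    have := h2 p m (by omega)
    omega

theorem discrete_ivt (u : ℕ → ℕ) (h : ∀ i, u (i + 1) ≤ u i + 1) (v : ℕ) (h0 : u 0 ≤ v) :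
    ∀ i, v ≤ u i → ∃ j, u j = v := by
  intro i
  induction i with
  | zero => intro hi; exact ⟨0, by omega⟩
  | succ k ih =>
    intro hi
    by_cases hk : v ≤ u k
    · exact ih hk
    · exact ⟨k + 1, by have := h k; omega⟩

/-- If `S = {s₁ < s₂ < ⋯} ⊆ ℤ⁺` has gaps `s_{i+1} − s_i` tending to infinity, then `S`
is not 3-walkable, so `ord(S) ≤ 2`. -/
theorem not_three_walkable_of_growing_gaps (s : ℕ → ℤ) (hmono : StrictMono s)
    (hpos : ∀ i, 0 < s i)
    (hgap : ∀ M : ℤ, ∃ N : ℕ, ∀ i ≥ N, M < s (i + 1) - s i) :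
    ¬ IsKWalkable (Set.range s) 3 := by
  intro hW
  have hg : ∀ M : ℕ, ∃ X : ℕ, ∀ x ≥ X, ∀ p < M, ∀ q < M, ∀ i j,
      (x : ℤ) - p = s i → (x : ℤ) - q = s j → ¬ i < j := by
    intro M
    obtain ⟨N, hN⟩ := hgap M
    refine ⟨M + (s N).toNat + 1, fun x hx p hp q hq i j hi hj hij => ?_⟩
    have hsN := hpos N
    have h1 : N < i := hmono.lt_iff_lt.1 (by omega)
    have h2 := hN i h1.le
    have h3 : s (i + 1) ≤ s j := hmono.monotone hij
    omega
  choose g hg using hg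
  obtain ⟨lvl, hlim, hlvl⟩ := exists_level g
  obtain ⟨f, hf⟩ := exists_coloring lvl
    (fun p x => lvl p + 2 ≤ lvl x ∧ (x : ℤ) - p ∈ Set.range s) (by
      rintro p q x ⟨hp, i, hi⟩ ⟨hq, j, hj⟩
      obtain ⟨M, hM, hlt⟩ := hlvl x (by omega)
      have a1 := hg M x hM p (hlt p hp) q (hlt q hq) i j hi.symm hj.symm
      have a2 := hg M x hM q (hlt q hq) p (hlt p hp) j i hj.symm hi.symm
      have : i = j := by omega
      subst this
      omega)
  obtain ⟨a, ha, hstep, hcol⟩ := hW (fun z => f z.toNat)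
  have hgrow : ∀ i : ℕ, a 0 + i ≤ a i := by
    intro i
    induction i with
    | zero => simp
    | succ k ih =>
      have := ha (Nat.lt_succ_self k)
      push_cast
      simp only [Nat.succ_eq_add_one] at this
      omega
  -- shift to the nonnegative part of the walk
  obtain ⟨k, hk⟩ : ∃ k : ℕ, ∀ i, 0 ≤ a (k + i) :=
    ⟨(-a 0).toNat, fun i => by have := hgrow ((-a 0).toNat + i); push_cast at this; omega⟩
  obtain ⟨b, hb⟩ : ∃ b : ℕ → ℕ, ∀ i, (b i : ℤ) = a (k + i) :=
    ⟨fun i => (a (k + i)).toNat, fun i => Int.toNat_of_nonneg (hk i)⟩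
  have hbc : ∀ i, f (b i) = f (a 0).toNat := by
    intro i
    have := hcol (k + i)
    simp only [← hb, Int.toNat_natCast] at this
    exact this
  have hu : ∀ i, lvl (b (i + 1)) ≤ lvl (b i) + 1 := by
    intro i
    by_contra hcon
    have hlt : b i < b (i + 1) := by
      have := ha (show k + i < k + (i + 1) by omega)
      rw [← hb, ← hb] at this
      exact_mod_cast this
    refine (hf (b (i + 1))).2 (b i) hlt ⟨by omega, ?_⟩ (by rw [hbc, hbc])
    rw [hb, hb]
    exact hstep (k + i)
  let c := f (a 0).toNat
  let v := 3 * lvl (b 0) + c.val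
  obtain ⟨X, hX⟩ := hlim v
  obtain ⟨j, hj⟩ := discrete_ivt (fun i => lvl (b i)) hu v (by simp only [v]; omega)
    (X + (-a 0).toNat) (hX _ (by
      have h1 := hgrow (k + (X + (-a 0).toNat))
      have h2 := hb (X + (-a 0).toNat)
      push_cast at h1
      omega))
  have := (hf (b j)).1
  rw [hbc] at this
  apply this
  have hc := c.isLt
  rw [hj]
  show c.val = (3 * lvl (b 0) + c.val) % 3
  omega
end
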